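/- arXiv:1807.03650 — 4 statements merged into one kernel-verified Lean document; each statement's English description precedes it below -/
import Mathlib

section
/- Let G be the complete graph on a finite vertex set V with edge set E, let M ≥ 1, let K = 1, and suppose there is no link thinning, so that on each layer the link set is exactly the set of edges both of whose endpoints are active on that layer, and a link is active in the merged network iff it exists on at least one layer. Then a link configuration x : E → {0,1} is feasible (i.e., occurs with positive probability in the M-layer model when every node activation probability q_i lies in (0,1)) if and only if the edge set {ℓ ∈ E : x_ℓ = 1} can be covered by at most M cliques, i.e., there exist vertex subsets S_1,…,S_M ⊆ V such that {ℓ ∈ E : x_ℓ = 1} equals the union over m = 1,…,M of the sets of edges with both endpoints in S_m. -/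
open MeasureTheory Finset

/-- Bernoulli measure on `Bool` with success probability `p`. -/
noncomputable def bern (p : ℝ) : Measure Bool :=
  ENNReal.ofReal p • Measure.dirac true + ENNReal.ofReal (1 - p) • Measure.dirac false

instance isFiniteMeasure_bern (p : ℝ) : IsFiniteMeasure (bern p) :=
  ⟨by simp [bern]⟩

theorem bern_singleton_pos {p : ℝ} (hp : p ∈ Set.Ioo (0 : ℝ) 1) (b : Bool) :
    0 < bern p {b} := by
  cases b <;> simp [bern, hp.1, hp.2]

/-- A product of nondegenerate Bernoulli measures charges exactly the nonempty events. -/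
theorem pi_bern_pos_iff {ι : Type*} [Fintype ι] {p : ι → ℝ}
    (hp : ∀ i, p i ∈ Set.Ioo (0 : ℝ) 1) (A : Set (ι → Bool)) :
    0 < Measure.pi (fun i => bern (p i)) A ↔ A.Nonempty := by
  refine ⟨fun h => nonempty_of_measure_ne_zero h.ne', fun ⟨ω, hω⟩ => ?_⟩
  refine lt_of_lt_of_le ?_ (measure_mono (Set.singleton_subset_iff.2 hω))
  rw [Measure.pi_singleton, pos_iff_ne_zero, Finset.prod_ne_zero_iff]
  exact fun i _ => (bern_singleton_pos (hp i) (ω i)).ne'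

/-- on the complete graph with `M` layers, no link thinning and `K = 1`,
a link configuration `x` is feasible (occurs with positive probability when every node
activation probability lies in `(0,1)`) iff the set of active links can be covered by
at most `M` cliques. -/
theorem stmt1 {V : Type} [Fintype V] [DecidableEq V] (M : ℕ) (hM : 1 ≤ M)
    (q : V → ℝ) (hq : ∀ i, q i ∈ Set.Ioo (0 : ℝ) 1) (x : Sym2 V → Bool) :
    0 < (Measure.pi fun k : Fin M × V => bern (q k.2))
          {ω : Fin M × V → Bool | ∀ e : Sym2 V, ¬e.IsDiag →
            ((∃ m : Fin M, ∀ v ∈ e, ω (m, v) = true) ↔ x e = true)}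
      ↔ ∃ S : Fin M → Set V, ∀ e : Sym2 V, ¬e.IsDiag →
          (x e = true ↔ ∃ m : Fin M, ∀ v ∈ e, v ∈ S m) := by
  rw [pi_bern_pos_iff (p := fun k : Fin M × V => q k.2) (fun k => hq k.2)]
  constructor
  · rintro ⟨ω, hω⟩
    exact ⟨fun m => {v | ω (m, v) = true}, fun e he => (hω e he).symm⟩
  · rintro ⟨S, hS⟩
    classical
    refine ⟨fun k => decide (k.2 ∈ S k.1), fun e he => ?_⟩
    simpa using (hS e he).symm
end

section
/- In the line model with M layers, for every n ≥ 2, every x^{(n)} = (x_1,…,x_n) ∈ {0,1}^n and every m ∈ {0,1,…,M}: Q_{x^{(n)}}(m) = (1−x_n) q̄^m Σ_{i=0}^{M−m} C(M−m,i) q^i q̄^{M−m−i} Q_{x^{(n−1)}}(i) + x_n Σ_{j=1}^m C(m,j) q^j q̄^{m−j} Σ_{i=0}^{M−m} C(M−m,i) q^i q̄^{M−m−i} Q_{x^{(n−1)}}(i+j), where x^{(n−1)} = (x_1,…,x_{n−1}) and C(a,b) denotes the binomial coefficient. -/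
open MeasureTheory ProbabilityTheory Finset

/-- The line model with `M` layers, `n` links (hence `n+1` nodes), node activation
probability `q`: every node is active on every layer independently with probability `q`. -/
noncomputable def lineμ (M n : ℕ) (q : ℝ) : Measure ((Fin M × Fin (n + 1)) → Bool) :=
  Measure.pi fun _ => bern q

/-- Link `e_{j+1} = (j+1, j+2)` (1-based) is active: some layer has both endpoints active. -/
def act {M n : ℕ} (j : Fin n) (ω : (Fin M × Fin (n + 1)) → Bool) : Prop :=
  ∃ m : Fin M, ω (m, j.castSucc) = true ∧ ω (m, j.succ) = true

/-- The event that the links are in configuration `x` (1-based: link `e_j` is active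
iff `x j = 1`). -/
def cfg {M n : ℕ} (x : ℕ → ℝ) : Set ((Fin M × Fin (n + 1)) → Bool) :=
  {ω | ∀ j : Fin n, (act j ω ↔ x (j.val + 1) = 1)}

/-- The event that the set of layers on which the last node `n+1` is active equals `A`. -/
def lastIn {M n : ℕ} (A : Finset (Fin M)) : Set ((Fin M × Fin (n + 1)) → Bool) :=
  {ω | ∀ k : Fin M, (ω (k, Fin.last n) = true ↔ k ∈ A)}

/-- `Q_{x^{(n)}}(m)`: conditional probability of configuration `x` given that the set of
layers on which node `n+1` is active equals the fixed set `A` (of cardinality `m`). -/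
noncomputable def Qcond (M n : ℕ) (q : ℝ) (x : ℕ → ℝ) (A : Finset (Fin M)) : ℝ :=
  (ProbabilityTheory.cond (lineμ M n q) (lastIn A) (cfg x)).toReal

/-- Weight of a single node state under the Bernoulli measure with parameter `q`. -/
noncomputable def nodeWeight (q : ℝ) (b : Bool) : ℝ := if b then q else 1 - q

/-- Product weight of a finite family of node states. -/
noncomputable def famWeight {ι : Type*} [Fintype ι] (q : ℝ) (ω : ι → Bool) : ℝ :=
  ∏ i, nodeWeight q (ω i)

/-- Append a node whose set of active layers is `A`. -/
def appendNode {M N : ℕ} (φ : Fin M × Fin N → Bool) (A : Finset (Fin M)) :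
    Fin M × Fin (N + 1) → Bool :=
  fun p => Fin.lastCases (motive := fun _ => Bool) (decide (p.1 ∈ A)) (fun j => φ (p.1, j)) p.2

@[simp] lemma appendNode_last {M N : ℕ} (φ : Fin M × Fin N → Bool) (A : Finset (Fin M))
    (k : Fin M) : appendNode φ A (k, Fin.last N) = decide (k ∈ A) := by
  simp [appendNode]

@[simp] lemma appendNode_castSucc {M N : ℕ} (φ : Fin M × Fin N → Bool) (A : Finset (Fin M))
    (k : Fin M) (j : Fin N) : appendNode φ A (k, j.castSucc) = φ (k, j) := by
  simp [appendNode]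

/-- A configuration on `N + 1` nodes is the set of active layers of the last node together
with a configuration on the first `N` nodes. -/
def appendNodeEquiv (M N : ℕ) :
    Finset (Fin M) × (Fin M × Fin N → Bool) ≃ (Fin M × Fin (N + 1) → Bool) where
  toFun p := appendNode p.2 p.1
  invFun ω := (Finset.univ.filter fun k => ω (k, Fin.last N) = true, fun p => ω (p.1, p.2.castSucc))
  left_inv p := by
    ext <;> simp
  right_inv ω := by
    funext ⟨k, i⟩
    induction i using Fin.lastCases <;> simp

lemma sum_appendNode {M N : ℕ} (F : (Fin M × Fin (N + 1) → Bool) → ℝ) :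
    ∑ ω, F ω = ∑ S : Finset (Fin M), ∑ φ : Fin M × Fin N → Bool, F (appendNode φ S) := by
  rw [← (appendNodeEquiv M N).sum_comp F, Fintype.sum_prod_type]
  rfl

lemma famWeight_appendNode {M N : ℕ} (q : ℝ) (φ : Fin M × Fin N → Bool) (A : Finset (Fin M)) :
    famWeight q (appendNode φ A) = q ^ A.card * (1 - q) ^ (M - A.card) * famWeight q φ := by
  have hA : ∏ k : Fin M, nodeWeight q (decide (k ∈ A)) = q ^ A.card * (1 - q) ^ (M - A.card) := by
    have hc : (Finset.univ.filter fun k => k ∉ A) = Aᶜ := by ext; simp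
    simp [nodeWeight, Finset.prod_ite, hc, Finset.card_compl]
  simp only [famWeight, Fintype.prod_prod_type, Fin.prod_univ_castSucc, appendNode_castSucc,
    appendNode_last, Finset.prod_mul_distrib, hA]
  ring

lemma sum_famWeight {ι : Type*} [Fintype ι] [DecidableEq ι] (q : ℝ) :
    ∑ ω : ι → Bool, famWeight q ω = 1 := by
  have h := Finset.prod_univ_sum (fun _ : ι => (Finset.univ : Finset Bool))
    (fun _ b => nodeWeight q b)
  rw [Fintype.piFinset_univ] at h
  simpa [famWeight, nodeWeight] using h.symm

lemma bern_singleton_toReal {q : ℝ} (hq : q ∈ Set.Ioo (0 : ℝ) 1) (b : Bool) :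
    (bern q {b}).toReal = nodeWeight q b := by
  have h0 := hq.1.le
  have h1 := hq.2.le
  cases b <;> simp [bern, nodeWeight, h0, h1]

instance bern_isFiniteMeasure (q : ℝ) : IsFiniteMeasure (bern q) := by
  constructor
  simp [bern]

instance lineμ_isFiniteMeasure (M n : ℕ) (q : ℝ) : IsFiniteMeasure (lineμ M n q) := by
  unfold lineμ
  infer_instance

open Classical in
lemma lineμ_toReal {M n : ℕ} {q : ℝ} (hq : q ∈ Set.Ioo (0 : ℝ) 1)
    (E : Set (Fin M × Fin (n + 1) → Bool)) :
    (lineμ M n q E).toReal = ∑ ω, if ω ∈ E then famWeight q ω else 0 := by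
  have hs : ∀ ω, (lineμ M n q).real {ω} = famWeight q ω := fun ω => by
    simp [Measure.real, lineμ, Measure.pi_singleton, ENNReal.toReal_prod,
      bern_singleton_toReal hq, famWeight]
  have h := sum_measureReal_singleton (μ := lineμ M n q) (Finset.univ.filter fun ω => ω ∈ E)
  simp only [hs, Finset.coe_filter, Finset.mem_univ, true_and, Set.ofPred_mem_eq] at h
  rw [← Finset.sum_filter, h]
  rfl

lemma appendNode_mem_lastIn {M n : ℕ} (φ : Fin M × Fin n → Bool) (S A : Finset (Fin M)) :
    appendNode φ S ∈ lastIn (n := n) A ↔ S = A := by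
  simp [lastIn, Finset.ext_iff]

lemma appendNode_mem_cfg {M n : ℕ} (x : ℕ → ℝ) (φ : Fin M × Fin n → Bool)
    (S A : Finset (Fin M)) :
    appendNode (appendNode φ S) A ∈ cfg (n := n + 1) x ↔
      appendNode φ S ∈ cfg (n := n) x ∧ ((S ∩ A).Nonempty ↔ x (n + 1) = 1) := by
  simp [cfg, act, Fin.forall_fin_succ', Finset.Nonempty, Fin.succ_castSucc, -Fin.castSucc_succ]

open Classical in
lemma lineμ_lastIn_inter_toReal {M n : ℕ} {q : ℝ} (hq : q ∈ Set.Ioo (0 : ℝ) 1)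
    (A : Finset (Fin M)) (E : Set (Fin M × Fin (n + 1) → Bool)) :
    (lineμ M n q (lastIn A ∩ E)).toReal = q ^ A.card * (1 - q) ^ (M - A.card) *
      ∑ φ : Fin M × Fin n → Bool, if appendNode φ A ∈ E then famWeight q φ else 0 := by
  rw [lineμ_toReal hq, sum_appendNode, Finset.sum_eq_single A]
  · simp [appendNode_mem_lastIn, famWeight_appendNode, Finset.mul_sum]
  · intro S _ hS
    simp [appendNode_mem_lastIn, hS]
  · simp

open Classical in
lemma Qcond_eq_sum {M n : ℕ} {q : ℝ} (hq : q ∈ Set.Ioo (0 : ℝ) 1) (x : ℕ → ℝ)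
    (A : Finset (Fin M)) :
    Qcond M n q x A =
      ∑ φ : Fin M × Fin n → Bool, if appendNode φ A ∈ cfg x then famWeight q φ else 0 := by
  have h1 := lineμ_lastIn_inter_toReal (n := n) hq A Set.univ
  have h2 := lineμ_lastIn_inter_toReal (n := n) hq A (cfg x)
  simp only [Set.inter_univ, Set.mem_univ, if_true, sum_famWeight, mul_one] at h1
  have hw : q ^ A.card * (1 - q) ^ (M - A.card) ≠ 0 :=
    (mul_pos (pow_pos hq.1 _) (pow_pos (sub_pos.2 hq.2) _)).ne'
  rw [Qcond, ProbabilityTheory.cond_apply (Set.toFinite _).measurableSet, ENNReal.toReal_mul,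
    ENNReal.toReal_inv, h1, h2, inv_mul_cancel_left₀ hw]

open Classical in
lemma Qcond_succ {M n : ℕ} {q : ℝ} (hq : q ∈ Set.Ioo (0 : ℝ) 1) (x : ℕ → ℝ)
    (A : Finset (Fin M)) :
    Qcond M (n + 1) q x A = ∑ S : Finset (Fin M),
      if ((S ∩ A).Nonempty ↔ x (n + 1) = 1) then
        q ^ S.card * (1 - q) ^ (M - S.card) * Qcond M n q x S else 0 := by
  rw [Qcond_eq_sum hq, sum_appendNode]
  refine Finset.sum_congr rfl fun S _ => ?_
  simp only [appendNode_mem_cfg, famWeight_appendNode]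
  split_ifs with h
  · simp [h, Qcond_eq_sum hq, Finset.mul_sum]
  · simp [h]

/-- A sum over all subsets `S`, split according to the sizes of `S ∩ A` and `S \ A`. -/
lemma sum_finset_inter_sdiff {M : ℕ} (A : Finset (Fin M)) (g : ℕ → ℕ → ℝ) :
    ∑ S : Finset (Fin M), g (S ∩ A).card (S \ A).card =
      ∑ j ∈ range (A.card + 1), (A.card.choose j : ℝ) *
        ∑ i ∈ range (M - A.card + 1), ((M - A.card).choose i : ℝ) * g j i := by
  have hsplit : ∑ S : Finset (Fin M), g (S ∩ A).card (S \ A).card =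
      ∑ p ∈ A.powerset ×ˢ Aᶜ.powerset, g p.1.card p.2.card := by
    refine Finset.sum_bij' (fun S _ => (S ∩ A, S \ A)) (fun p _ => p.1 ∪ p.2) ?_ ?_ ?_ ?_ ?_
    · intro S _
      simp only [mem_product, mem_powerset]
      exact ⟨inter_subset_right, fun a ha => by simp_all⟩
    · simp
    · intro S _
      ext a
      simp
      tauto
    · rintro ⟨P, R⟩ h
      simp only [mem_product, mem_powerset] at h
      ext a
      all_goals
        have h1 := @h.1 a
        have h2 := @h.2 a
        simp at h1 h2 ⊢
        tauto
    · simp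
  rw [hsplit, Finset.sum_product]
  have hinner : ∀ j, ∑ R ∈ Aᶜ.powerset, g j R.card =
      ∑ i ∈ range (M - A.card + 1), ((M - A.card).choose i : ℝ) * g j i := fun j => by
    rw [Finset.sum_powerset_apply_card (g j)]
    simp [Finset.card_compl]
  simp only [hinner]
  rw [Finset.sum_powerset_apply_card fun j => ∑ i ∈ range (M - A.card + 1),
    ((M - A.card).choose i : ℝ) * g j i]
  simp

open Classical in
lemma Qcond_succ_of_card {M n : ℕ} {q : ℝ} (hq : q ∈ Set.Ioo (0 : ℝ) 1) (x : ℕ → ℝ)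
    (f : ℕ → ℝ) (hf : ∀ S : Finset (Fin M), Qcond M n q x S = f S.card) (A : Finset (Fin M)) :
    Qcond M (n + 1) q x A = ∑ j ∈ range (A.card + 1), (A.card.choose j : ℝ) *
      ∑ i ∈ range (M - A.card + 1), ((M - A.card).choose i : ℝ) *
        if (j ≠ 0 ↔ x (n + 1) = 1) then q ^ (i + j) * (1 - q) ^ (M - (i + j)) * f (i + j)
        else 0 := by
  rw [Qcond_succ hq, ← sum_finset_inter_sdiff A fun j i =>
    if (j ≠ 0 ↔ x (n + 1) = 1) then q ^ (i + j) * (1 - q) ^ (M - (i + j)) * f (i + j) else 0]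
  refine Finset.sum_congr rfl fun S _ => ?_
  simp only [hf, Finset.card_sdiff_add_card_inter, Finset.card_ne_zero]

lemma exists_Qcond_eq_card {M : ℕ} {q : ℝ} (hq : q ∈ Set.Ioo (0 : ℝ) 1) (x : ℕ → ℝ) (n : ℕ) :
    ∃ f : ℕ → ℝ, ∀ S : Finset (Fin M), Qcond M n q x S = f S.card := by
  classical
  induction n with
  | zero =>
    refine ⟨fun _ => 1, fun S => ?_⟩
    rw [Qcond_eq_sum hq]
    simp [cfg, famWeight]
  | succ n ih =>
    obtain ⟨f, hf⟩ := ih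
    exact ⟨fun c => ∑ j ∈ range (c + 1), (c.choose j : ℝ) *
      ∑ i ∈ range (M - c + 1), ((M - c).choose i : ℝ) *
        if (j ≠ 0 ↔ x (n + 1) = 1) then q ^ (i + j) * (1 - q) ^ (M - (i + j)) * f (i + j)
        else 0, Qcond_succ_of_card hq x f hf⟩

/-- the recursion for `Q_{x^{(n)}}(m)`, `n ≥ 2`. -/
theorem stmt3 (M : ℕ) (hM : 1 ≤ M) (q : ℝ) (hq : q ∈ Set.Ioo (0 : ℝ) 1)
    (n : ℕ) (hn : 2 ≤ n) (x : ℕ → ℝ) (hx : ∀ j, 1 ≤ j → j ≤ n → (x j = 0 ∨ x j = 1))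
    (m : ℕ) (hm : m ≤ M) (A : Finset (Fin M)) (hA : A.card = m)
    (B : ℕ → Finset (Fin M)) (hB : ∀ i ≤ M, (B i).card = i) :
    Qcond M n q x A
      = (1 - x n) * (1 - q) ^ m *
          (∑ i ∈ Finset.range (M - m + 1),
            ((M - m).choose i : ℝ) * q ^ i * (1 - q) ^ (M - m - i) * Qcond M (n - 1) q x (B i))
        + x n *
          ∑ j ∈ Finset.Icc 1 m, (m.choose j : ℝ) * q ^ j * (1 - q) ^ (m - j) *
            ∑ i ∈ Finset.range (M - m + 1),
              ((M - m).choose i : ℝ) * q ^ i * (1 - q) ^ (M - m - i) *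
                Qcond M (n - 1) q x (B (i + j)) := by
  classical
  obtain ⟨n, rfl⟩ : ∃ k, n = k + 1 := ⟨n - 1, by omega⟩
  obtain ⟨f, hf⟩ := exists_Qcond_eq_card (M := M) hq x n
  have hBf : ∀ i ≤ M, Qcond M n q x (B i) = f i := fun i hi => by rw [hf, hB i hi]
  have hpow : ∀ j ≤ m, ∀ i ≤ M - m, (1 - q) ^ (M - (i + j)) =
      (1 - q) ^ (m - j) * (1 - q) ^ (M - m - i) := fun j hj i hi => by
    rw [← pow_add]
    congr 1
    omega
  rw [Qcond_succ_of_card hq x f hf A, hA, Nat.add_sub_cancel]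
  rcases hx (n + 1) (by omega) le_rfl with h | h
  · rw [h, Finset.sum_eq_single 0]
    · rw [zero_mul, add_zero, Finset.mul_sum, Finset.mul_sum]
      refine Finset.sum_congr rfl fun i hi => ?_
      have hi : i ≤ M - m := by simpa [Nat.lt_succ_iff] using hi
      have := hpow 0 (by omega) i hi
      simp only [add_zero, Nat.sub_zero] at this
      rw [hBf i (by omega)]
      simp [this]
      ring
    · intro j _ hj
      simp [hj]
    · simp
  · rw [h, Finset.range_eq_Ico, Finset.sum_eq_sum_Ico_succ_bot (by omega)]
    simp only [ne_eq, not_true_eq_false, iff_true, if_false, mul_zero,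
      Finset.sum_const_zero, zero_add, sub_self, zero_mul, one_mul]
    refine Finset.sum_congr (by ext; simp) fun j hj => ?_
    have hj : 1 ≤ j ∧ j ≤ m := by simpa [Nat.lt_succ_iff, Nat.succ_le_iff] using hj
    simp only [Finset.mul_sum]
    refine Finset.sum_congr rfl fun i hi => ?_
    have hi : i ≤ M - m := by simpa [Nat.lt_succ_iff] using hi
    rw [if_pos (by omega), hBf (i + j) (by omega), hpow j hj.2 i hi, pow_add]
    ring
end

section
/- In the line model with M layers, for every m ∈ {0,1,…,M}: Q_{0^{(1)}}(m) = q̄^m, and for every n ≥ 2, Q_{0^{(n)}}(m) = q̄^m [1 − (n−2)q² + P_{n−1}(q)]^m [1 − (n−1)q² + P_n(q)]^{M−m}, where 0^{(n)} is the all-zeros configuration of length n. -/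
open MeasureTheory ProbabilityTheory Finset

/-- The polynomials `P_k(q)`: `P₁ = P₂ = 0`,
`P_k = (1−q) P_{k−1} + q(1−q) P_{k−2} + q³ + (k−3) q⁴` for `k ≥ 3`. -/
noncomputable def Ppoly (q : ℝ) : ℕ → ℝ
  | 0 => 0
  | 1 => 0
  | 2 => 0
  | (k + 3) => (1 - q) * Ppoly q (k + 2) + q * (1 - q) * Ppoly q (k + 1) + q ^ 3 + (k : ℝ) * q ^ 4

/-- The mass `bern q` gives to a single outcome. -/
def bernWeight (q : ℝ) (b : Bool) : ℝ := if b then q else 1 - q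

open Classical in
/-- The probability that the activity pattern of one layer belongs to `S`. -/
noncomputable def layerProb {n : ℕ} (q : ℝ) (S : Set (Fin n → Bool)) : ℝ :=
  ∑ g : Fin n → Bool, if g ∈ S then ∏ i, bernWeight q (g i) else 0

/-- Patterns of one layer without two consecutive active nodes, whose last node has status `b`. -/
def sparseEndingIn (n : ℕ) (b : Bool) : Set (Fin (n + 1) → Bool) :=
  {g | (∀ j : Fin n, ¬(g j.castSucc = true ∧ g j.succ = true)) ∧ g (Fin.last n) = b}

/-- The probability that, among `n` nodes of one layer, no two consecutive ones are active. -/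
def sparseProb (q : ℝ) : ℕ → ℝ
  | 0 => 1
  | 1 => 1
  | (n + 2) => (1 - q) * sparseProb q (n + 1) + q * (1 - q) * sparseProb q n

lemma sparseProb_succ (q : ℝ) (n : ℕ) :
    sparseProb q (n + 1) = 1 - (n : ℝ) * q ^ 2 + Ppoly q (n + 1) := by
  induction n using Nat.twoStepInduction with
  | zero => simp [sparseProb, Ppoly]
  | one => simp [sparseProb, Ppoly]; ring
  | more n ih₁ ih₂ =>
    rw [sparseProb, ih₁, ih₂, Ppoly]
    push_cast
    ring

lemma isProbabilityMeasure_bern {q : ℝ} (hq : q ∈ Set.Ioo (0 : ℝ) 1) :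
    IsProbabilityMeasure (bern q) := by
  refine ⟨?_⟩
  simp only [bern, Measure.add_apply, Measure.smul_apply, measure_univ, smul_eq_mul, mul_one]
  rw [← ENNReal.ofReal_add hq.1.le (sub_nonneg.2 hq.2.le)]
  simp

lemma bern_real_singleton {q : ℝ} (hq : q ∈ Set.Ioo (0 : ℝ) 1) (b : Bool) :
    (bern q).real {b} = bernWeight q b := by
  cases b <;> simp [Measure.real, bern, bernWeight, hq.1.le, hq.2.le]

lemma sum_bernWeight (q : ℝ) : ∑ b, bernWeight q b = 1 := by
  simp [bernWeight]

/-- Layers are independent, so layerwise events multiply. -/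
lemma lineμ_real_layerwise {M n : ℕ} {q : ℝ} (hq : q ∈ Set.Ioo (0 : ℝ) 1)
    (S : Fin M → Set (Fin (n + 1) → Bool)) :
    (lineμ M n q).real {ω | ∀ k, (fun i => ω (k, i)) ∈ S k} = ∏ k, layerProb q (S k) := by
  classical
  have := isProbabilityMeasure_bern hq
  have : IsProbabilityMeasure (lineμ M n q) := by unfold lineμ; infer_instance
  have hsingle (ω : Fin M × Fin (n + 1) → Bool) :
      (lineμ M n q).real {ω} = ∏ p, bernWeight q (ω p) := by
    simp only [Measure.real, lineμ, Measure.pi_singleton, ENNReal.toReal_prod]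
    exact Finset.prod_congr rfl fun p _ => bern_real_singleton hq (ω p)
  have hset : {ω : Fin M × Fin (n + 1) → Bool | ∀ k, (fun i => ω (k, i)) ∈ S k} =
      ↑(Finset.univ.filter fun ω : Fin M × Fin (n + 1) → Bool =>
        ∀ k, (fun i => ω (k, i)) ∈ S k) := by
    ext; simp
  rw [hset, ← sum_measureReal_singleton, Finset.sum_filter]
  simp only [layerProb]
  rw [Finset.prod_univ_sum, Fintype.piFinset_univ]
  refine Fintype.sum_equiv (Equiv.curry _ _ _) _ _ fun ω => ?_
  rw [hsingle, Fintype.prod_prod_type]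
  split_ifs with h
  · exact Finset.prod_congr rfl fun k _ => (if_pos (h k)).symm
  · push Not at h
    obtain ⟨k, hk⟩ := h
    exact (Finset.prod_eq_zero (Finset.mem_univ k) (if_neg hk)).symm

lemma layerProb_snoc {n : ℕ} (q : ℝ) (S : Set (Fin (n + 1) → Bool)) :
    layerProb q S = ∑ b, bernWeight q b *
      layerProb q {g : Fin n → Bool | (Fin.snoc g b : Fin (n + 1) → Bool) ∈ S} := by
  classical
  simp only [layerProb, Finset.mul_sum]
  rw [← Fintype.sum_prod_type']
  refine (Fintype.sum_equiv (Fin.snocEquiv fun _ => Bool) _ _ fun p => ?_).symm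
  simp [Fin.snocEquiv, Fin.prod_univ_castSucc, mul_comm]

lemma layerProb_univ (n : ℕ) (q : ℝ) : layerProb q (Set.univ : Set (Fin n → Bool)) = 1 := by
  classical
  simp only [layerProb, Set.mem_univ, if_true]
  rw [← Fintype.piFinset_univ, ← Finset.prod_univ_sum]
  simp only [sum_bernWeight, Finset.prod_const_one]

lemma layerProb_empty (n : ℕ) (q : ℝ) : layerProb q (∅ : Set (Fin n → Bool)) = 0 := by
  simp [layerProb]

lemma layerProb_union {n : ℕ} (q : ℝ) {S T : Set (Fin n → Bool)} (h : Disjoint S T) :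
    layerProb q (S ∪ T) = layerProb q S + layerProb q T := by
  classical
  simp only [layerProb, ← Finset.sum_add_distrib]
  refine Finset.sum_congr rfl fun g _ => ?_
  have : g ∈ S → g ∉ T := fun hS => Set.disjoint_left.1 h hS
  by_cases hS : g ∈ S <;> by_cases hT : g ∈ T <;> simp_all

lemma layerProb_last_eq (n : ℕ) (q : ℝ) (b : Bool) :
    layerProb q {g : Fin (n + 1) → Bool | g (Fin.last n) = b} = bernWeight q b := by
  rw [layerProb_snoc]
  cases b <;> simp [layerProb_univ, layerProb_empty]

lemma snoc_mem_sparseEndingIn {n : ℕ} (g : Fin (n + 1) → Bool) (b c : Bool) :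
    (Fin.snoc g c : Fin (n + 2) → Bool) ∈ sparseEndingIn (n + 1) b ↔
      (∀ j : Fin n, ¬(g j.castSucc = true ∧ g j.succ = true)) ∧
        ¬(g (Fin.last n) = true ∧ c = true) ∧ c = b := by
  simp only [sparseEndingIn, Set.mem_ofPred_eq, Fin.forall_fin_succ', Fin.snoc_castSucc,
    Fin.succ_castSucc, Fin.succ_last, Fin.snoc_last, and_assoc]

lemma layerProb_sparseEndingIn_true_succ (n : ℕ) (q : ℝ) :
    layerProb q (sparseEndingIn (n + 1) true) = q * layerProb q (sparseEndingIn n false) := by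
  rw [layerProb_snoc]
  simp only [snoc_mem_sparseEndingIn]
  simp [layerProb_empty, bernWeight, sparseEndingIn]

lemma layerProb_sparseEndingIn_false_succ (n : ℕ) (q : ℝ) :
    layerProb q (sparseEndingIn (n + 1) false) = (1 - q) *
      (layerProb q (sparseEndingIn n false) + layerProb q (sparseEndingIn n true)) := by
  have hdisj : Disjoint (sparseEndingIn n false) (sparseEndingIn n true) :=
    Set.disjoint_left.2 fun g h₁ h₂ => Bool.false_ne_true (h₁.2.symm.trans h₂.2)
  have hunion : sparseEndingIn n false ∪ sparseEndingIn n true =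
      {g | ∀ j : Fin n, ¬(g j.castSucc = true ∧ g j.succ = true)} := by
    ext g
    cases h : g (Fin.last n) <;> simp [sparseEndingIn, h]
  rw [layerProb_snoc, ← layerProb_union q hdisj, hunion]
  simp [snoc_mem_sparseEndingIn, layerProb_empty, bernWeight]

lemma layerProb_sparseEndingIn (n : ℕ) (q : ℝ) :
    layerProb q (sparseEndingIn n false) = (1 - q) * sparseProb q n ∧
      layerProb q (sparseEndingIn (n + 1) true) = q * ((1 - q) * sparseProb q n) := by
  rw [layerProb_sparseEndingIn_true_succ]
  suffices h : layerProb q (sparseEndingIn n false) = (1 - q) * sparseProb q n by simp [h]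
  have hzero (b : Bool) : layerProb q (sparseEndingIn 0 b) = bernWeight q b := by
    simpa [sparseEndingIn] using layerProb_last_eq 0 q b
  induction n using Nat.twoStepInduction with
  | zero => simp [hzero, sparseProb, bernWeight]
  | one =>
    rw [layerProb_sparseEndingIn_false_succ, hzero, hzero]
    simp [sparseProb, bernWeight]
  | more n ih₁ ih₂ =>
    rw [layerProb_sparseEndingIn_false_succ, ih₂, layerProb_sparseEndingIn_true_succ, ih₁,
      sparseProb]
    ring

lemma lastIn_eq_layerwise {M n : ℕ} (A : Finset (Fin M)) :
    (lastIn A : Set (Fin M × Fin (n + 1) → Bool)) =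
      {ω | ∀ k, (fun i => ω (k, i)) ∈
        {g : Fin (n + 1) → Bool | g (Fin.last n) = decide (k ∈ A)}} := by
  ext ω
  simp only [lastIn, Set.mem_ofPred_eq]
  refine forall_congr' fun k => ?_
  by_cases h : k ∈ A <;> simp [h]

lemma lastIn_inter_cfg_zero {M n : ℕ} (A : Finset (Fin M)) :
    (lastIn A ∩ cfg (fun _ => 0) : Set (Fin M × Fin (n + 1) → Bool)) =
      {ω | ∀ k, (fun i => ω (k, i)) ∈ sparseEndingIn n (decide (k ∈ A))} := by
  rw [lastIn_eq_layerwise]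
  ext ω
  simp only [cfg, act, sparseEndingIn, Set.mem_inter_iff, Set.mem_ofPred_eq, zero_ne_one, iff_false,
    not_exists, forall_and]
  rw [forall_comm, and_comm]

/-- The all-zeros conditional probability in terms of single-layer probabilities. -/
lemma Qcond_zero_succ {M : ℕ} (n : ℕ) {q : ℝ} (hq : q ∈ Set.Ioo (0 : ℝ) 1) (A : Finset (Fin M)) :
    Qcond M (n + 1) q (fun _ => 0) A = ((1 - q) * sparseProb q n) ^ A.card *
      sparseProb q (n + 1) ^ (M - A.card) := by
  have hq₀ : q ≠ 0 := hq.1.ne'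
  have hq₁ : 1 - q ≠ 0 := (sub_pos.2 hq.2).ne'
  have hmeas : MeasurableSet (lastIn A : Set (Fin M × Fin (n + 1 + 1) → Bool)) :=
    (Set.toFinite _).measurableSet
  have hlayer (k : Fin M) : (bernWeight q (decide (k ∈ A)))⁻¹ *
      layerProb q (sparseEndingIn (n + 1) (decide (k ∈ A))) =
      if k ∈ A then (1 - q) * sparseProb q n else sparseProb q (n + 1) := by
    by_cases h : k ∈ A
    · simp [h, bernWeight, (layerProb_sparseEndingIn n q).2, hq₀]
    · simp [h, bernWeight, (layerProb_sparseEndingIn (n + 1) q).1, hq₁]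
  rw [Qcond, cond_apply hmeas, ENNReal.toReal_mul, ENNReal.toReal_inv, ← measureReal_def,
    ← measureReal_def, lastIn_inter_cfg_zero, lineμ_real_layerwise hq, lastIn_eq_layerwise,
    lineμ_real_layerwise hq, ← Finset.prod_inv_distrib, ← Finset.prod_mul_distrib]
  simp only [layerProb_last_eq, hlayer, Finset.prod_ite, Finset.prod_const]
  rw [Finset.filter_mem_eq_inter, Finset.univ_inter, Finset.filter_not,
    Finset.filter_mem_eq_inter, Finset.univ_inter, ← Finset.compl_eq_univ_sdiff,
    Finset.card_compl, Fintype.card_fin]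

/-- `Q_{0^{(1)}}(m) = (1−q)^m` and, for `n ≥ 2`,
`Q_{0^{(n)}}(m) = (1−q)^m [1−(n−2)q² + P_{n−1}(q)]^m [1−(n−1)q² + P_n(q)]^{M−m}`. -/
theorem stmt4 (M : ℕ) (hM : 1 ≤ M) (q : ℝ) (hq : q ∈ Set.Ioo (0 : ℝ) 1) :
    (∀ m ≤ M, ∀ A : Finset (Fin M), A.card = m →
        Qcond M 1 q (fun _ => 0) A = (1 - q) ^ m) ∧
    (∀ n, 2 ≤ n → ∀ m ≤ M, ∀ A : Finset (Fin M), A.card = m →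
        Qcond M n q (fun _ => 0) A
          = (1 - q) ^ m * (1 - ((n : ℝ) - 2) * q ^ 2 + Ppoly q (n - 1)) ^ m
              * (1 - ((n : ℝ) - 1) * q ^ 2 + Ppoly q n) ^ (M - m)) := by
  refine ⟨?_, ?_⟩
  · rintro m - A rfl
    rw [Qcond_zero_succ 0 hq]
    simp [sparseProb]
  · rintro n hn m - A rfl
    obtain ⟨n, rfl⟩ := Nat.exists_eq_add_of_le' hn
    rw [Qcond_zero_succ (n + 1) hq, sparseProb_succ, sparseProb_succ, mul_pow]
    push_cast
    congr 3
    · ring_nf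
    · ring_nf
end

section
/- Consider a sequence of M-layer models indexed by M on a fixed finite simple graph G = (V,E), with uniform parameters p_ℓ(M) = p(M) for all links and q_i(M) = q(M) for all nodes, satisfying p(M) M^{α} → c > 0 and q(M) M^{β} → d > 0 with α, β ≥ 0, and fixed threshold K ≥ 1. Then for every link ℓ ∈ E: (1) if α + 2β > 1, lim_{M→∞} P[X_ℓ = 1] = 0; (2) if α + 2β < 1, lim_{M→∞} P[X_ℓ = 1] = 1; (3) if α + 2β = 1, lim_{M→∞} P[X_ℓ = 1] = Σ_{w ≥ K} (c d²)^w e^{−c d²} / w!. -/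
open MeasureTheory Filter Finset

open scoped Classical

/-- The `M`-layer model: mutually independent Bernoulli variables `Y_{m,ℓ}` (link
thinning, probability `p ℓ`) and `Z_{m,i}` (node activation, probability `q i`). -/
noncomputable def netμ (V : Type) [Fintype V] (M : ℕ) (p : V × V → ℝ) (q : V → ℝ) :
    Measure (((Fin M × (V × V)) ⊕ (Fin M × V)) → Bool) :=
  Measure.pi fun k =>
    bern (Sum.elim (fun a : Fin M × (V × V) => p a.2) (fun a : Fin M × V => q a.2) k)

/-- Link `ℓ = (i,j)` exists on layer `m`: `Y_{m,ℓ} = Z_{m,i} = Z_{m,j} = 1`. -/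
def exOn {V : Type} {M : ℕ} (m : Fin M) (ℓ : V × V)
    (ω : ((Fin M × (V × V)) ⊕ (Fin M × V)) → Bool) : Prop :=
  ω (Sum.inl (m, ℓ)) = true ∧ ω (Sum.inr (m, ℓ.1)) = true ∧ ω (Sum.inr (m, ℓ.2)) = true

/-- `W_ℓ`: the number of layers on which link `ℓ` exists. -/
noncomputable def Wnum {V : Type} {M : ℕ} (ℓ : V × V)
    (ω : ((Fin M × (V × V)) ⊕ (Fin M × V)) → Bool) : ℕ :=
  (Finset.univ.filter fun m : Fin M => exOn m ℓ ω).card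

/-- The event `{K ≤ N}` is complementary to the disjoint union of the events `{N = w}`, `w < K`. -/
lemma measureReal_le_eq_one_sub_sum {Ω : Type*} [MeasurableSpace Ω] (μ : Measure Ω)
    [IsProbabilityMeasure μ] (N : Ω → ℕ) (hN : Measurable N) (K : ℕ) :
    μ.real {ω | K ≤ N ω} = 1 - ∑ w ∈ Finset.range K, μ.real {ω | N ω = w} := by
  have hcompl : {ω | K ≤ N ω} = (⋃ w ∈ Finset.range K, {ω | N ω = w})ᶜ := by
    ext ω
    simp only [Set.mem_ofPred_eq, Set.mem_compl_iff, Set.mem_iUnion, Finset.mem_range]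
    grind
  have hmeas (w : ℕ) : MeasurableSet {ω | N ω = w} := hN (measurableSet_singleton w)
  rw [hcompl, probReal_compl_eq_one_sub (Finset.measurableSet_biUnion _ fun w _ => hmeas w),
    measureReal_biUnion_finset _ fun w _ => hmeas w]
  intro a _ b _ hab
  exact Set.disjoint_left.2 fun ω ha hb => hab (ha.symm.trans hb)

/-- The exact pattern of occurring events in an independent family of events of probability `r`. -/
lemma measureReal_filter_eq_of_iIndepSet {Ω ι : Type*} [MeasurableSpace Ω] [Fintype ι]
    {μ : Measure Ω} [IsProbabilityMeasure μ] {A : ι → Set Ω} (hA : ∀ i, MeasurableSet (A i))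
    (hind : ProbabilityTheory.iIndepSet A μ) {r : ℝ} (hr : ∀ i, μ.real (A i) = r)
    (S : Finset ι) :
    μ.real {ω | Finset.univ.filter (fun i => ω ∈ A i) = S}
      = r ^ S.card * (1 - r) ^ (Fintype.card ι - S.card) := by
  have hset : {ω | Finset.univ.filter (fun i => ω ∈ A i) = S}
      = ⋂ i, if i ∈ S then A i else (A i)ᶜ := by
    ext ω
    simp only [Set.mem_ofPred_eq, Set.mem_iInter, Finset.ext_iff, Finset.mem_filter,
      Finset.mem_univ, true_and]
    refine forall_congr' fun i => ?_
    by_cases hi : i ∈ S <;> simp [hi]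
  have hgen (i : ι) : MeasurableSet[MeasurableSpace.generateFrom {A i}] (A i) :=
    MeasurableSpace.measurableSet_generateFrom rfl
  have hprod := ((ProbabilityTheory.iIndepSet_iff_iIndep A μ).1 hind).meas_iInter
    (s := fun i => if i ∈ S then A i else (A i)ᶜ) fun i => by
      split_ifs
      · exact hgen i
      · exact (hgen i).compl
  have hfactor (i : ι) :
      (μ (if i ∈ S then A i else (A i)ᶜ)).toReal = if i ∈ S then r else 1 - r := by
    split_ifs
    · exact hr i
    · exact (probReal_compl_eq_one_sub (hA i)).trans (by rw [hr i])
  rw [hset, Measure.real, hprod, ENNReal.toReal_prod]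
  simp only [hfactor, Finset.prod_ite, Finset.prod_const, Finset.filter_mem_eq_inter,
    Finset.univ_inter, Finset.filter_notMem_eq_sdiff]
  rw [← Finset.compl_eq_univ_sdiff, Finset.card_compl]

/-- The number of occurring events in an independent family of events of the same probability
is binomial. -/
lemma measureReal_card_filter_eq_of_iIndepSet {Ω ι : Type*} [MeasurableSpace Ω] [Fintype ι]
    {μ : Measure Ω} [IsProbabilityMeasure μ] {A : ι → Set Ω} (hA : ∀ i, MeasurableSet (A i))
    (hind : ProbabilityTheory.iIndepSet A μ) {r : ℝ} (hr : ∀ i, μ.real (A i) = r) (w : ℕ) :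
    μ.real {ω | (Finset.univ.filter fun i => ω ∈ A i).card = w}
      = (Fintype.card ι).choose w * r ^ w * (1 - r) ^ (Fintype.card ι - w) := by
  have hunion : {ω | (Finset.univ.filter fun i => ω ∈ A i).card = w}
      = ⋃ S ∈ Finset.powersetCard w (Finset.univ : Finset ι),
        {ω | Finset.univ.filter (fun i => ω ∈ A i) = S} := by
    ext ω
    simp
  have hmeas (S : Finset ι) :
      MeasurableSet {ω | Finset.univ.filter (fun i => ω ∈ A i) = S} := by
    simp only [Finset.ext_iff, Finset.mem_filter, Finset.mem_univ, true_and]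
    measurability
  rw [hunion, measureReal_biUnion_finset _ fun S _ => hmeas S]
  · rw [Finset.sum_congr rfl fun S hS => by
      rw [measureReal_filter_eq_of_iIndepSet hA hind hr, (Finset.mem_powersetCard.1 hS).2]]
    simp [mul_assoc]
  · intro S _ T _ hST
    exact Set.disjoint_left.2 fun ω hS hT => hST (hS.symm.trans hT)

lemma isProbabilityMeasure_bern_s13 {p : ℝ} (h0 : 0 ≤ p) (h1 : p ≤ 1) :
    IsProbabilityMeasure (bern p) :=
  ⟨by simp [bern, ← ENNReal.ofReal_add h0 (sub_nonneg.2 h1)]⟩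

lemma bern_singleton_true (p : ℝ) : bern p {true} = ENNReal.ofReal p := by
  simp [bern]

lemma isProbabilityMeasure_bern_elim {V : Type} {M : ℕ} {p q : ℝ}
    (hp : p ∈ Set.Ioc (0 : ℝ) 1) (hq : q ∈ Set.Ioc (0 : ℝ) 1)
    (k : (Fin M × (V × V)) ⊕ (Fin M × V)) :
    IsProbabilityMeasure (bern (Sum.elim (fun _ => p) (fun _ => q) k)) := by
  rcases k with k | k
  · exact isProbabilityMeasure_bern_s13 hp.1.le hp.2
  · exact isProbabilityMeasure_bern_s13 hq.1.le hq.2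

lemma isProbabilityMeasure_netμ (V : Type) [Fintype V] (M : ℕ) {p q : ℝ}
    (hp : p ∈ Set.Ioc (0 : ℝ) 1) (hq : q ∈ Set.Ioc (0 : ℝ) 1) :
    IsProbabilityMeasure (netμ V M (fun _ => p) fun _ => q) := by
  have := isProbabilityMeasure_bern_elim (V := V) (M := M) hp hq
  unfold netμ
  infer_instance

lemma netμ_forall_mem_eq_true {V : Type} [Fintype V] {M : ℕ} {p q : ℝ}
    (hp : p ∈ Set.Ioc (0 : ℝ) 1) (hq : q ∈ Set.Ioc (0 : ℝ) 1)
    (T : Finset ((Fin M × (V × V)) ⊕ (Fin M × V))) :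
    netμ V M (fun _ => p) (fun _ => q) {ω | ∀ k ∈ T, ω k = true}
      = ∏ k ∈ T, ENNReal.ofReal (Sum.elim (fun _ => p) (fun _ => q) k) := by
  have := isProbabilityMeasure_bern_elim (V := V) (M := M) hp hq
  have hset : {ω : ((Fin M × (V × V)) ⊕ (Fin M × V)) → Bool | ∀ k ∈ T, ω k = true}
      = Set.univ.pi fun k => if k ∈ T then {true} else Set.univ := by
    ext ω
    simp only [Set.mem_ofPred_eq, Set.mem_pi, Set.mem_univ, forall_const]
    refine forall_congr' fun k => ?_
    by_cases hk : k ∈ T <;> simp [hk]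
  rw [hset, netμ, Measure.pi_pi, ← Finset.prod_subset (Finset.subset_univ T)]
  · exact Finset.prod_congr rfl fun k hk => by rw [if_pos hk, bern_singleton_true]
  · intro k _ hk
    rw [if_neg hk, measure_univ]

/-- The probability that a link exists on all the layers of a given set. -/
lemma netμ_biInter_exOn {V : Type} [Fintype V] {M : ℕ} {p q : ℝ}
    (hp : p ∈ Set.Ioc (0 : ℝ) 1) (hq : q ∈ Set.Ioc (0 : ℝ) 1) {ℓ : V × V} (hℓ : ℓ.1 ≠ ℓ.2)
    (s : Finset (Fin M)) :
    netμ V M (fun _ => p) (fun _ => q) (⋂ m ∈ s, {ω | exOn m ℓ ω})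
      = ENNReal.ofReal (p * q ^ 2) ^ s.card := by
  have hset : (⋂ m ∈ s, {ω | exOn m ℓ ω})
      = {ω | ∀ k ∈ (s ×ˢ {ℓ}).disjSum (s ×ˢ {ℓ.1, ℓ.2}), ω k = true} := by
    ext ω
    simp only [Set.mem_iInter, Set.mem_ofPred_eq, exOn, Sum.forall, Finset.inl_mem_disjSum,
      Finset.inr_mem_disjSum, Finset.mem_product, Finset.mem_singleton, Finset.mem_insert,
      Prod.forall]
    grind
  rw [hset, netμ_forall_mem_eq_true hp hq, Finset.prod_disjSum]
  simp only [Sum.elim_inl, Sum.elim_inr, Finset.prod_const, Finset.card_product,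
    Finset.card_singleton, Finset.card_pair hℓ, mul_one]
  rw [ENNReal.ofReal_mul hp.1.le, ENNReal.ofReal_pow hq.1.le, mul_pow, ← pow_mul,
    mul_comm s.card]

/-- The number of layers on which a link exists is binomial, so the probability that the link is
active is a binomial tail. -/
lemma netμ_le_Wnum {V : Type} [Fintype V] {M : ℕ} {p q : ℝ}
    (hp : p ∈ Set.Ioc (0 : ℝ) 1) (hq : q ∈ Set.Ioc (0 : ℝ) 1) {ℓ : V × V} (hℓ : ℓ.1 ≠ ℓ.2)
    (K : ℕ) :
    (netμ V M (fun _ => p) (fun _ => q) {ω | K ≤ Wnum ℓ ω}).toReal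
      = 1 - ∑ w ∈ Finset.range K,
        (M.choose w : ℝ) * (p * q ^ 2) ^ w * (1 - p * q ^ 2) ^ (M - w) := by
  have := isProbabilityMeasure_netμ V M hp hq
  have hone (m : Fin M) : netμ V M (fun _ => p) (fun _ => q) {ω | exOn m ℓ ω}
      = ENNReal.ofReal (p * q ^ 2) := by
    simpa using netμ_biInter_exOn hp hq hℓ {m}
  have hmeas (m : Fin M) : MeasurableSet {ω | exOn (V := V) m ℓ ω} :=
    (Set.toFinite _).measurableSet
  have hind : ProbabilityTheory.iIndepSet (fun m : Fin M => {ω | exOn m ℓ ω})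
      (netμ V M (fun _ => p) fun _ => q) := by
    rw [ProbabilityTheory.iIndepSet_iff_meas_biInter hmeas]
    intro s
    simp only [netμ_biInter_exOn hp hq hℓ, hone, Finset.prod_const]
  have hreal (m : Fin M) : (netμ V M (fun _ => p) fun _ => q).real {ω | exOn m ℓ ω}
      = p * q ^ 2 := by
    rw [Measure.real, hone, ENNReal.toReal_ofReal (mul_nonneg hp.1.le (sq_nonneg q))]
  refine (measureReal_le_eq_one_sub_sum _ (Wnum ℓ) (measurable_of_finite _) K).trans ?_
  congr 1
  refine Finset.sum_congr rfl fun w _ => ?_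
  simpa [Wnum] using measureReal_card_filter_eq_of_iIndepSet hmeas hind hreal w

/-- A fixed binomial probability vanishes in the limit when the mean tends to infinity. -/
lemma tendsto_choose_mul_pow_zero_of_tendsto_mul_atTop {r : ℕ → ℝ} (h0 : ∀ n, 0 ≤ r n)
    (h1 : ∀ n, r n ≤ 1) (hr : Tendsto (fun n : ℕ => n * r n) atTop atTop) (w : ℕ) :
    Tendsto (fun n : ℕ => (n.choose w : ℝ) * r n ^ w * (1 - r n) ^ (n - w)) atTop (nhds 0) := by
  have hlim : Tendsto (fun n : ℕ => ((n * r n) ^ w * Real.exp (-(n * r n))) * Real.exp w)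
      atTop (nhds 0) := by
    simpa using ((Real.tendsto_pow_mul_exp_neg_atTop_nhds_zero w).comp hr).mul_const (Real.exp w)
  refine tendsto_of_tendsto_of_tendsto_of_le_of_le' tendsto_const_nhds hlim
    (Eventually.of_forall fun n => ?_) ?_
  · have := sub_nonneg.2 (h1 n)
    have := h0 n
    positivity
  · filter_upwards [eventually_ge_atTop w] with n hn
    have hchoose : (n.choose w : ℝ) * r n ^ w ≤ (n * r n) ^ w := by
      rw [mul_pow]
      exact mul_le_mul_of_nonneg_right (mod_cast Nat.choose_le_pow n w) (pow_nonneg (h0 n) w)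
    have hexp : (1 - r n) ^ (n - w) ≤ Real.exp (-(n * r n)) * Real.exp w := by
      calc (1 - r n) ^ (n - w) ≤ Real.exp (-r n) ^ (n - w) :=
            pow_le_pow_left₀ (sub_nonneg.2 (h1 n)) (Real.one_sub_le_exp_neg _) _
        _ = Real.exp (-(n * r n) + w * r n) := by
            rw [← Real.exp_nat_mul, Nat.cast_sub hn]
            ring_nf
        _ ≤ Real.exp (-(n * r n) + w) := by
            gcongr
            exact mul_le_of_le_one_right w.cast_nonneg (h1 n)
        _ = _ := Real.exp_add _ _
    rw [mul_assoc ((n * r n) ^ w)]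
    exact mul_le_mul hchoose hexp (pow_nonneg (sub_nonneg.2 (h1 n)) _)
      (pow_nonneg (mul_nonneg n.cast_nonneg (h0 n)) w)

/-- The upper tail of a Poisson distribution as one minus a finite sum. -/
lemma tsum_poisson_tail (r : ℝ) (K : ℕ) :
    (∑' w : ℕ, if K ≤ w then r ^ w * Real.exp (-r) / (w.factorial : ℝ) else 0)
      = 1 - ∑ w ∈ Finset.range K, Real.exp (-r) * r ^ w / (w.factorial : ℝ) := by
  have hsum : HasSum (fun w : ℕ => Real.exp (-r) * r ^ w / (w.factorial : ℝ)) 1 := by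
    have h := (NormedSpace.expSeries_div_hasSum_exp r).mul_left (Real.exp (-r))
    rw [← Real.exp_eq_exp_ℝ, ← Real.exp_add, neg_add_cancel, Real.exp_zero] at h
    simpa only [mul_div_assoc] using h
  have hfin : HasSum (fun w : ℕ => if w ∈ Finset.range K then
      Real.exp (-r) * r ^ w / (w.factorial : ℝ) else 0)
      (∑ w ∈ Finset.range K, Real.exp (-r) * r ^ w / (w.factorial : ℝ)) := by
    rw [Finset.sum_congr rfl fun w hw => (if_pos hw).symm]
    exact hasSum_sum_of_ne_finset_zero fun w hw => if_neg hw
  rw [← (hsum.sub hfin).tsum_eq]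
  refine tsum_congr fun w => ?_
  by_cases hw : K ≤ w
  · simp [hw, not_lt.2 hw, mul_comm]
  · simp [hw, not_le.1 hw]

/-- If the binomial means converge to `a`, the binomial tails converge to the Poisson tail. -/
lemma tendsto_binomial_tail_of_tendsto_mul {r : ℕ → ℝ} {a : ℝ}
    (hr : Tendsto (fun n : ℕ => n * r n) atTop (nhds a)) (K : ℕ) :
    Tendsto (fun n : ℕ => 1 - ∑ w ∈ Finset.range K,
        (n.choose w : ℝ) * r n ^ w * (1 - r n) ^ (n - w)) atTop
      (nhds (∑' w : ℕ, if K ≤ w then a ^ w * Real.exp (-a) / (w.factorial : ℝ) else 0)) := by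
  rw [tsum_poisson_tail]
  exact tendsto_const_nhds.sub (tendsto_finsetSum _ fun w _ =>
    ProbabilityTheory.tendsto_choose_mul_pow_of_tendsto_mul_atTop w hr)

/-- trichotomy.  With uniform parameters `p(M) ~ c M^{−α}`,
`q(M) ~ d M^{−β}` and threshold `K`, the probability that a given link is active tends
to `0` if `α + 2β > 1`, to `1` if `α + 2β < 1`, and to `∑_{w ≥ K} π(w; c d²)` if
`α + 2β = 1`. -/
theorem stmt13 {V : Type} [Fintype V] [DecidableEq V] (E : Finset (V × V))
    (hE1 : ∀ ℓ ∈ E, ℓ.1 ≠ ℓ.2) (hE2 : ∀ ℓ ∈ E, (ℓ.2, ℓ.1) ∉ E)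
    (p q : ℕ → ℝ) (hp : ∀ M, p M ∈ Set.Ioc (0 : ℝ) 1) (hq : ∀ M, q M ∈ Set.Ioc (0 : ℝ) 1)
    (α β c d : ℝ) (hα : 0 ≤ α) (hβ : 0 ≤ β) (hc : 0 < c) (hd : 0 < d)
    (hplim : Tendsto (fun M : ℕ => p M * (M : ℝ) ^ α) atTop (nhds c))
    (hqlim : Tendsto (fun M : ℕ => q M * (M : ℝ) ^ β) atTop (nhds d))
    (K : ℕ) (hK : 1 ≤ K) (ℓ : V × V) (hℓ : ℓ ∈ E) :
    (1 < α + 2 * β →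
      Tendsto (fun M : ℕ =>
          ((netμ V M (fun _ => p M) fun _ => q M) {ω | K ≤ Wnum ℓ ω}).toReal) atTop
        (nhds 0)) ∧
    (α + 2 * β < 1 →
      Tendsto (fun M : ℕ =>
          ((netμ V M (fun _ => p M) fun _ => q M) {ω | K ≤ Wnum ℓ ω}).toReal) atTop
        (nhds 1)) ∧
    (α + 2 * β = 1 →
      Tendsto (fun M : ℕ =>
          ((netμ V M (fun _ => p M) fun _ => q M) {ω | K ≤ Wnum ℓ ω}).toReal) atTop
        (nhds (∑' w : ℕ, if K ≤ w then
          (c * d ^ 2) ^ w * Real.exp (-(c * d ^ 2)) / (w.factorial : ℝ) else 0))) := by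
  have hr0 (M : ℕ) : 0 ≤ p M * q M ^ 2 := mul_nonneg (hp M).1.le (sq_nonneg _)
  have hr1 (M : ℕ) : p M * q M ^ 2 ≤ 1 :=
    mul_le_one₀ (hp M).2 (sq_nonneg _) (pow_le_one₀ (hq M).1.le (hq M).2)
  have hscaled : Tendsto (fun M : ℕ => (p M * (M : ℝ) ^ α) * (q M * (M : ℝ) ^ β) ^ 2) atTop
      (nhds (c * d ^ 2)) := hplim.mul (hqlim.pow 2)
  have hmean : (fun M : ℕ => (p M * (M : ℝ) ^ α) * (q M * (M : ℝ) ^ β) ^ 2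
      * (M : ℝ) ^ (1 - (α + 2 * β))) =ᶠ[atTop] fun M : ℕ => M * (p M * q M ^ 2) := by
    filter_upwards [eventually_gt_atTop 0] with M hM
    have hM' : (0 : ℝ) < M := Nat.cast_pos.2 hM
    have hpow : (M : ℝ) ^ α * ((M : ℝ) ^ β) ^ 2 * (M : ℝ) ^ (1 - (α + 2 * β)) = M := by
      rw [← Real.rpow_mul_natCast hM'.le, ← Real.rpow_add hM', ← Real.rpow_add hM']
      convert Real.rpow_one (M : ℝ) using 2
      push_cast
      ring
    calc _ = p M * q M ^ 2 *
          ((M : ℝ) ^ α * ((M : ℝ) ^ β) ^ 2 * (M : ℝ) ^ (1 - (α + 2 * β))) := by ring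
      _ = _ := by rw [hpow, mul_comm]
  simp only [netμ_le_Wnum (hp _) (hq _) (hE1 ℓ hℓ)]
  refine ⟨fun h => ?_, fun h => ?_, fun h => ?_⟩
  · have hpow : Tendsto (fun M : ℕ => (M : ℝ) ^ (1 - (α + 2 * β))) atTop (nhds 0) := by
      simpa [Function.comp_def] using
        (tendsto_rpow_neg_atTop (sub_pos.2 h)).comp (tendsto_natCast_atTop_atTop (R := ℝ))
    have hzero := (hscaled.mul hpow).congr' hmean
    rw [mul_zero] at hzero
    convert tendsto_binomial_tail_of_tendsto_mul hzero K using 2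
    refine ((tsum_congr fun w => ?_).trans tsum_zero).symm
    split_ifs with hw
    · simp [zero_pow (Nat.one_le_iff_ne_zero.1 (hK.trans hw))]
    · rfl
  · have hpow : Tendsto (fun M : ℕ => (M : ℝ) ^ (1 - (α + 2 * β))) atTop atTop :=
      (tendsto_rpow_atTop (sub_pos.2 h)).comp tendsto_natCast_atTop_atTop
    have hinf := (hscaled.pos_mul_atTop (by positivity) hpow).congr' hmean
    simpa using tendsto_const_nhds.sub (tendsto_finsetSum (Finset.range K) fun w _ =>
      tendsto_choose_mul_pow_zero_of_tendsto_mul_atTop hr0 hr1 hinf w)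
  · refine tendsto_binomial_tail_of_tendsto_mul (hscaled.congr' ?_) K
    simpa [h] using hmean
end
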